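/- (ℬ, ⋆) is an associative unital ℂ-algebra whose unit is the empty B-diagram ε, and it is graded by ω: for all B-diagrams G and G', the element G ⋆ G' is a linear combination of B-diagrams G'' with ω(G'') = ω(G) + ω(G'). -/

import Mathlib

open scoped BigOperators

structure BD where
  lam : List ℕ
  up : Finset ℕ
  dn : Finset ℕ
  ed : Finset (ℕ × ℕ)
deriving DecidableEq

namespace BD

/-- number of vertices -/
def nv (G : BD) : ℕ := G.lam.length

/-- number of half-edges -/
def omega (G : BD) : ℕ := G.lam.sum

/-- the vertex to which a half-edge belongs -/
def v (G : BD) (k : ℕ) : ℕ :=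
  (List.range G.lam.length).countP (fun i => (G.lam.take i).sum < k)

def Valid (G : BD) : Prop :=
  (∀ x ∈ G.lam, 0 < x) ∧
  G.up ⊆ Finset.Icc 1 G.omega ∧
  G.dn ⊆ Finset.Icc 1 G.omega ∧
  (∀ p ∈ G.ed, p.1 ∈ G.up ∧ p.2 ∈ G.dn ∧ G.v p.1 < G.v p.2) ∧
  (∀ p ∈ G.ed, ∀ q ∈ G.ed, p.1 = q.1 → p = q) ∧
  (∀ p ∈ G.ed, ∀ q ∈ G.ed, p.2 = q.2 → p = q)

def eps : BD := ⟨[], ∅, ∅, ∅⟩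

theorem eps_valid : eps.Valid := by
  refine ⟨?_, ?_, ?_, ?_, ?_, ?_⟩ <;> simp [eps, Valid, omega]

def HfUp (G : BD) : Finset ℕ := G.up \ G.ed.image Prod.fst
def HfDn (G : BD) : Finset ℕ := G.dn \ G.ed.image Prod.snd
def hfUp (G : BD) : ℕ := G.HfUp.card
def hfDn (G : BD) : ℕ := G.HfDn.card
def hc (G : BD) : ℕ :=
  (G.omega - G.ed.card - G.hfUp) + (G.omega - G.ed.card - G.hfDn)

/-- composition of `G'` over `G` along a matching `s` -/
def comp (G G' : BD) (s : Finset (ℕ × ℕ)) : BD where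
  lam := G.lam ++ G'.lam
  up := G.up ∪ G'.up.image (· + G.omega)
  dn := G.dn ∪ G'.dn.image (· + G.omega)
  ed := G.ed ∪ s.image (fun p => (p.1, p.2 + G.omega)) ∪
        G'.ed.image (fun p => (p.1 + G.omega, p.2 + G.omega))

/-- `s` encodes a strictly increasing sequence `a₁ < ⋯ < a_k` of elements of `H_f↑(G)`
matched with pairwise distinct elements `b₁,…,b_k` of `H_f↓(G')`. -/
def Matching (G G' : BD) (s : Finset (ℕ × ℕ)) : Prop :=
  (∀ p ∈ s, p.1 ∈ G.HfUp ∧ p.2 ∈ G'.HfDn) ∧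
  (∀ p ∈ s, ∀ q ∈ s, p.1 = q.1 → p = q) ∧
  (∀ p ∈ s, ∀ q ∈ s, p.2 = q.2 → p = q)

open scoped Classical in
noncomputable def matchings (G G' : BD) : Finset (Finset (ℕ × ℕ)) :=
  (G.HfUp ×ˢ G'.HfDn).powerset.filter (fun s => Matching G G' s)

/-- juxtaposition -/
def juxt (G G' : BD) : BD := comp G G' ∅

def Indiv (G : BD) : Prop :=
  ∀ G₁ G₂ : BD, G₁.Valid → G₂.Valid → G = juxt G₁ G₂ → G₁ = G ∨ G₂ = G

/-- half-edges attached to the vertices in `I` -/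
def HI (G : BD) (I : Finset ℕ) : Finset ℕ :=
  (Finset.Icc 1 G.omega).filter (fun k => G.v k ∈ I)

/-- the increasing relabelling bijection -/
def phi (G : BD) (I : Finset ℕ) (k : ℕ) : ℕ := ((G.HI I).filter (· ≤ k)).card

/-- sub-B-diagram on the set of vertices `I` -/
def sub (G : BD) (I : Finset ℕ) : BD where
  lam := ((List.range G.lam.length).filter (fun i => i + 1 ∈ I)).map (fun i => G.lam.getD i 0)
  up := (G.up ∩ G.HI I).image (G.phi I)
  dn := (G.dn ∩ G.HI I).image (G.phi I)
  ed := (G.ed.filter (fun p => G.v p.1 ∈ I ∧ G.v p.2 ∈ I)).image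
          (fun p => (G.phi I p.1, G.phi I p.2))

def Isolated (G : BD) (I : Finset ℕ) : Prop :=
  ∀ p ∈ G.ed, (G.v p.1 ∈ I ↔ G.v p.2 ∈ I)

def Connected (G : BD) : Prop :=
  ∀ i j : ℕ, 1 ≤ i → i < j → j ≤ G.nv →
    ∃ (k : ℕ) (c : Fin (k + 1) → ℕ × ℕ),
      (∀ ℓ, c ℓ ∈ G.ed) ∧
      (i = G.v (c 0).1 ∨ i = G.v (c 0).2) ∧
      (j = G.v (c (Fin.last k)).1 ∨ j = G.v (c (Fin.last k)).2) ∧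
      ∀ ℓ : Fin k,
        G.v (c ℓ.castSucc).1 = G.v (c ℓ.succ).1 ∨ G.v (c ℓ.castSucc).1 = G.v (c ℓ.succ).2 ∨
        G.v (c ℓ.castSucc).2 = G.v (c ℓ.succ).1 ∨ G.v (c ℓ.castSucc).2 = G.v (c ℓ.succ).2

def IsConnComp (G : BD) (I : Finset ℕ) : Prop :=
  I ⊆ Finset.Icc 1 G.nv ∧ I.Nonempty ∧ (G.sub I).Connected ∧
  ∀ J : Finset ℕ, I ⊆ J → J ⊆ Finset.Icc 1 G.nv → (G.sub J).Connected → J = I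

end BD

open scoped TensorProduct

/-- B-diagrams -/
abbrev BDiagram := {G : BD // G.Valid}

/-- the free `ℂ`-vector space on the set of B-diagrams -/
abbrev BSpace := BDiagram →₀ ℂ

open scoped Classical in
noncomputable def mkB (G : BD) : BSpace :=
  if h : G.Valid then Finsupp.single ⟨G, h⟩ 1 else 0

noncomputable def unitB : BSpace := Finsupp.single ⟨BD.eps, BD.eps_valid⟩ 1

noncomputable def liftB {V : Type*} [AddCommMonoid V] [Module ℂ V] (f : BDiagram → V) :
    BSpace →ₗ[ℂ] V :=
  Finsupp.lsum ℂ fun A => LinearMap.toSpanSingleton ℂ V (f A)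

noncomputable def mulfun (A B : BDiagram) : BSpace :=
  ∑ s ∈ BD.matchings A.1 B.1, mkB (BD.comp A.1 B.1 s)

/-- the product ⋆ of the algebra of B-diagrams, as a bilinear map -/
noncomputable def starB : BSpace →ₗ[ℂ] BSpace →ₗ[ℂ] BSpace :=
  liftB fun A => liftB fun B => mulfun A B

open scoped Classical in
/-- the coproduct evaluated on a B-diagram -/
noncomputable def dfun (A : BDiagram) : BSpace ⊗[ℂ] BSpace :=
  ∑ I ∈ (Finset.Icc 1 A.1.nv).powerset.filter (fun I => A.1.Isolated I),
    mkB (A.1.sub I) ⊗ₜ[ℂ] mkB (A.1.sub (Finset.Icc 1 A.1.nv \ I))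

/-- the coproduct Δ of ℬ -/
noncomputable def deltaL : BSpace →ₗ[ℂ] BSpace ⊗[ℂ] BSpace := liftB dfun

/-- the counit of ℬ -/
noncomputable def counitB : BSpace →ₗ[ℂ] ℂ :=
  liftB fun A => if A.1 = BD.eps then (1 : ℂ) else 0

namespace BD

theorem mem_matchings {G G' : BD} {s : Finset (ℕ × ℕ)} :
    s ∈ matchings G G' ↔ Matching G G' s := by
  classical
  unfold matchings
  rw [Finset.mem_filter, Finset.mem_powerset]
  refine ⟨fun h => h.2, fun h => ⟨fun p hp => ?_, h⟩⟩
  rw [Finset.mem_product]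
  exact h.1 p hp

theorem mem_HfUp {G : BD} {x : ℕ} : x ∈ G.HfUp ↔ x ∈ G.up ∧ ∀ y, (x, y) ∉ G.ed := by
  simp [HfUp]

theorem mem_HfDn {G : BD} {x : ℕ} : x ∈ G.HfDn ↔ x ∈ G.dn ∧ ∀ y, (y, x) ∉ G.ed := by
  simp [HfDn]

theorem mem_sh {S : Finset ℕ} {a x : ℕ} : x ∈ S.image (· + a) ↔ a ≤ x ∧ x - a ∈ S := by
  rw [Finset.mem_image]
  constructor
  · rintro ⟨y, hy, rfl⟩
    simpa using hy
  · rintro ⟨h, h'⟩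
    exact ⟨_, h', by omega⟩

theorem mem_sh2 {S : Finset (ℕ × ℕ)} {a b x y : ℕ} :
    (x, y) ∈ S.image (fun p => (p.1 + a, p.2 + b)) ↔ a ≤ x ∧ b ≤ y ∧ (x - a, y - b) ∈ S := by
  rw [Finset.mem_image]
  constructor
  · rintro ⟨⟨u, w⟩, hy, h⟩
    simp only [Prod.mk.injEq] at h
    obtain ⟨rfl, rfl⟩ := h
    simpa using hy
  · rintro ⟨h, h1, h'⟩
    exact ⟨_, h', by simp only [Prod.mk.injEq]; omega⟩

theorem omega_comp (G G' : BD) (s) : (comp G G' s).omega = G.omega + G'.omega := by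
  simp [comp, omega]

theorem mem_up_comp {G G' : BD} {s} {x : ℕ} :
    x ∈ (comp G G' s).up ↔ x ∈ G.up ∨ (G.omega ≤ x ∧ x - G.omega ∈ G'.up) := by
  simp only [comp, Finset.mem_union, mem_sh]

theorem mem_dn_comp {G G' : BD} {s} {x : ℕ} :
    x ∈ (comp G G' s).dn ↔ x ∈ G.dn ∨ (G.omega ≤ x ∧ x - G.omega ∈ G'.dn) := by
  simp only [comp, Finset.mem_union, mem_sh]

theorem mem_ed_comp {G G' : BD} {s} {x y : ℕ} :
    (x, y) ∈ (comp G G' s).ed ↔ (x, y) ∈ G.ed ∨ (G.omega ≤ y ∧ (x, y - G.omega) ∈ s) ∨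
      (G.omega ≤ x ∧ G.omega ≤ y ∧ (x - G.omega, y - G.omega) ∈ G'.ed) := by
  have := @mem_sh2 s 0 G.omega x y
  simp only [add_zero, Nat.sub_zero, Nat.zero_le, true_and] at this
  simp only [comp, Finset.mem_union, mem_sh2, this, or_assoc]

theorem v_le (G : BD) (k : ℕ) : G.v k ≤ G.lam.length := by
  unfold v
  exact List.countP_le_length.trans (by simp)

theorem v_pos (G : BD) (k : ℕ) (h : 1 ≤ k) (h' : k ≤ G.omega) : 1 ≤ G.v k := by
  unfold v
  apply List.countP_pos_iff.2
  refine ⟨0, ?_, decide_eq_true (by simp only [List.take_zero, List.sum_nil]; omega)⟩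
  rw [List.mem_range]
  rcases hl : G.lam with _ | _
  · simp [omega, hl] at h'; omega
  · simp

theorem v_comp_le (G G' : BD) (s) (k : ℕ) (h : k ≤ G.omega) : (comp G G' s).v k = G.v k := by
  unfold v
  simp only [comp, List.length_append, List.range_add, List.countP_append, List.countP_map]
  rw [Nat.add_eq_left.2]
  · apply List.countP_congr
    intro i hi
    rw [List.mem_range] at hi
    simp only [decide_eq_true_eq, List.take_append_of_le_length hi.le]
  · rw [List.countP_eq_zero]
    intro i hi
    simp only [Function.comp, List.take_length_add_append, List.sum_append, decide_eq_true_eq]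
    unfold omega at h
    omega

theorem v_comp_gt (G G' : BD) (s) (k : ℕ) (h : 1 ≤ k) :
    (comp G G' s).v (k + G.omega) = G.lam.length + G'.v k := by
  unfold v
  simp only [comp, List.length_append, List.range_add, List.countP_append, List.countP_map]
  congr 1
  · conv_rhs => rw [← List.length_range (n := G.lam.length)]
    rw [List.countP_eq_length]
    intro i hi
    rw [List.mem_range] at hi
    have : (G.lam.take i).sum ≤ G.lam.sum := (List.take_sublist i G.lam).sum_le_sum (by simp)
    simp only [decide_eq_true_eq, List.take_append_of_le_length hi.le, omega]
    omega
  · apply List.countP_congr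
    intro i hi
    simp only [Function.comp, List.take_length_add_append, List.sum_append, decide_eq_true_eq, omega]
    omega

/-- bounds and matching properties, in curried form -/
structure V (G : BD) : Prop where
  up : ∀ x ∈ G.up, 1 ≤ x ∧ x ≤ G.omega
  dn : ∀ x ∈ G.dn, 1 ≤ x ∧ x ≤ G.omega
  e1 : ∀ x y, (x, y) ∈ G.ed → x ∈ G.up
  e2 : ∀ x y, (x, y) ∈ G.ed → y ∈ G.dn
  f1 : ∀ x y z, (x, y) ∈ G.ed → (x, z) ∈ G.ed → y = z
  f2 : ∀ x y z, (x, z) ∈ G.ed → (y, z) ∈ G.ed → x = y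

theorem Valid.V {G : BD} (h : G.Valid) : G.V := by
  obtain ⟨h1, h2, h3, h4, h5, h6⟩ := h
  refine ⟨fun x hx => by simpa using h2 hx, fun x hx => by simpa using h3 hx,
    fun x y h => (h4 _ h).1, fun x y h => (h4 _ h).2.1, fun x y z h h' => ?_, fun x y z h h' => ?_⟩
  · simpa using h5 _ h _ h' rfl
  · simpa using h6 _ h _ h' rfl

theorem matching_iff {G G' : BD} {s : Finset (ℕ × ℕ)} : Matching G G' s ↔
    (∀ x y, (x, y) ∈ s → x ∈ G.up) ∧ (∀ x y, (x, y) ∈ s → ∀ z, (x, z) ∉ G.ed) ∧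
    (∀ x y, (x, y) ∈ s → y ∈ G'.dn) ∧ (∀ x y, (x, y) ∈ s → ∀ z, (z, y) ∉ G'.ed) ∧
    (∀ x y z, (x, y) ∈ s → (x, z) ∈ s → y = z) ∧
    (∀ x y z, (x, z) ∈ s → (y, z) ∈ s → x = y) := by
  constructor
  · rintro ⟨h1, h2, h3⟩
    simp only [mem_HfUp, mem_HfDn] at h1
    refine ⟨fun x y h => (h1 _ h).1.1, fun x y h => (h1 _ h).1.2, fun x y h => (h1 _ h).2.1,
      fun x y h => (h1 _ h).2.2, fun x y z h h' => ?_, fun x y z h h' => ?_⟩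
    · simpa using h2 _ h _ h' rfl
    · simpa using h3 _ h _ h' rfl
  · rintro ⟨h1, h2, h3, h4, h5, h6⟩
    refine ⟨fun p hp => ?_, ?_, ?_⟩
    · rw [mem_HfUp, mem_HfDn]
      exact ⟨⟨h1 _ _ hp, h2 _ _ hp⟩, h3 _ _ hp, h4 _ _ hp⟩
    · rintro ⟨x, y⟩ h ⟨x', z⟩ h' rfl
      exact Prod.ext rfl (h5 _ _ _ h h')
    · rintro ⟨x, y⟩ h ⟨x', z⟩ h' h''
      simp only at h''
      subst h''
      exact Prod.ext (h6 _ _ _ h h') rfl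

theorem comp_valid {G G' : BD} {s} (hG : G.Valid) (hG' : G'.Valid) (hs : Matching G G' s) :
    (comp G G' s).Valid := by
  have V1 := hG.V
  have V2 := hG'.V
  obtain ⟨m1, m2, m3, m4, m5, m6⟩ := matching_iff.1 hs
  obtain ⟨u1, d1, e1, e2, f1, f2⟩ := V1
  obtain ⟨u1', d1', e1', e2', f1', f2'⟩ := V2
  refine ⟨?_, ?_, ?_, ?_, ?_, ?_⟩
  · intro x hx
    simp only [comp, List.mem_append] at hx
    exact hx.elim (hG.1 x) (hG'.1 x)
  · intro x hx
    rw [mem_up_comp] at hx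
    rw [Finset.mem_Icc, omega_comp]
    grind
  · intro x hx
    rw [mem_dn_comp] at hx
    rw [Finset.mem_Icc, omega_comp]
    grind
  · rintro ⟨x, y⟩ h
    rw [mem_ed_comp] at h
    simp only [mem_up_comp, mem_dn_comp]
    rcases h with h | ⟨hy, h⟩ | ⟨hx, hy, h⟩
    · refine ⟨Or.inl (e1 _ _ h), Or.inl (e2 _ _ h), ?_⟩
      rw [v_comp_le _ _ _ _ (u1 _ (e1 _ _ h)).2, v_comp_le _ _ _ _ (d1 _ (e2 _ _ h)).2]
      exact (hG.2.2.2.1 _ h).2.2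
    · refine ⟨Or.inl (m1 _ _ h), Or.inr ⟨hy, m3 _ _ h⟩, ?_⟩
      obtain ⟨y, rfl⟩ := Nat.exists_eq_add_of_le' hy
      rw [Nat.add_sub_cancel] at h
      have := d1' _ (m3 _ _ h)
      rw [v_comp_le _ _ _ _ (u1 _ (m1 _ _ h)).2, v_comp_gt _ _ _ _ this.1]
      have := v_pos _ _ this.1 this.2
      have := v_le G x
      omega
    · refine ⟨Or.inr ⟨hx, e1' _ _ h⟩, Or.inr ⟨hy, e2' _ _ h⟩, ?_⟩
      obtain ⟨y, rfl⟩ := Nat.exists_eq_add_of_le' hy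
      obtain ⟨x, rfl⟩ := Nat.exists_eq_add_of_le' hx
      simp only [Nat.add_sub_cancel] at h
      have := d1' _ (e2' _ _ h)
      have h2 := u1' _ (e1' _ _ h)
      rw [v_comp_gt _ _ _ _ h2.1, v_comp_gt _ _ _ _ this.1]
      have := (hG'.2.2.2.1 _ h).2.2
      simp only at this
      omega
  · rintro ⟨x, y⟩ h ⟨x', z⟩ h' h''
    simp only at h''
    subst h''
    rw [mem_ed_comp] at h h'
    refine Prod.ext rfl ?_
    simp only
    grind
  · rintro ⟨x, z⟩ h ⟨y, z'⟩ h' h''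
    simp only at h''
    subst h''
    rw [mem_ed_comp] at h h'
    refine Prod.ext ?_ rfl
    simp only
    grind

/-- the part of `t` from `B` to `C` -/
def fT (a : ℕ) (t : Finset (ℕ × ℕ)) : Finset (ℕ × ℕ) :=
  (t.filter (fun p => a < p.1)).image (fun p => (p.1 - a, p.2))

/-- the edges from `A` to `B` or `C` -/
def fS (a b : ℕ) (s t : Finset (ℕ × ℕ)) : Finset (ℕ × ℕ) :=
  s ∪ (t.filter (fun p => p.1 ≤ a)).image (fun p => (p.1 + 0, p.2 + b))

/-- the part of `s` from `A` to `B` -/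
def gS (b : ℕ) (s : Finset (ℕ × ℕ)) : Finset (ℕ × ℕ) := s.filter (fun p => p.2 ≤ b)

/-- the edges from `A` or `B` to `C` -/
def gT (a b : ℕ) (t s : Finset (ℕ × ℕ)) : Finset (ℕ × ℕ) :=
  (s.filter (fun p => b < p.2)).image (fun p => (p.1, p.2 - b)) ∪
    t.image (fun p => (p.1 + a, p.2 + 0))

theorem mem_fT {a t x y} : (x, y) ∈ fT a t ↔ 1 ≤ x ∧ (x + a, y) ∈ t := by
  simp only [fT, Finset.mem_image, Finset.mem_filter, Prod.exists, Prod.mk.injEq]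
  constructor
  · rintro ⟨u, w, ⟨h, h'⟩, rfl, rfl⟩
    rw [Nat.sub_add_cancel h'.le]
    exact ⟨by omega, h⟩
  · rintro ⟨h, h'⟩
    exact ⟨_, _, ⟨h', by omega⟩, by omega, rfl⟩

theorem mem_fS {a b s t x y} :
    (x, y) ∈ fS a b s t ↔ (x, y) ∈ s ∨ (x ≤ a ∧ b ≤ y ∧ (x, y - b) ∈ t) := by
  simp only [fS, Finset.mem_union, mem_sh2, Finset.mem_filter]
  simp
  tauto

theorem mem_gS {b s x y} : (x, y) ∈ gS b s ↔ (x, y) ∈ s ∧ y ≤ b := by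
  simp [gS]

theorem mem_gT {a b s t x y} :
    (x, y) ∈ gT a b t s ↔ (1 ≤ y ∧ (x, y + b) ∈ s) ∨ (a ≤ x ∧ (x - a, y) ∈ t) := by
  simp only [gT, Finset.mem_union, mem_sh2, Nat.sub_zero, Nat.zero_le, true_and]
  refine or_congr ?_ Iff.rfl
  simp only [Finset.mem_image, Finset.mem_filter, Prod.exists, Prod.mk.injEq]
  constructor
  · rintro ⟨u, w, ⟨h, h'⟩, rfl, rfl⟩
    rw [Nat.sub_add_cancel h'.le]
    exact ⟨by omega, h⟩
  · rintro ⟨h, h'⟩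
    exact ⟨_, _, ⟨h', by omega⟩, rfl, by omega⟩

section
variable {A B C : BD} (hA : A.Valid) (hB : B.Valid) (hC : C.Valid)
include hA hB hC

theorem fT_matching {s t} (hs : Matching A B s) (ht : Matching (comp A B s) C t) :
    Matching B C (fT A.omega t) := by
  obtain ⟨u1, d1, e1, e2, f1, f2⟩ := hA.V
  obtain ⟨u2, d2, e3, e4, f3, f4⟩ := hB.V
  obtain ⟨u3, d3, e5, e6, f5, f6⟩ := hC.V
  rw [matching_iff] at *
  simp only [mem_up_comp, mem_ed_comp, mem_fT] at *
  obtain ⟨m1, m2, m3, m4, m5, m6⟩ := hs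
  obtain ⟨n1, n2, n3, n4, n5, n6⟩ := ht
  refine ⟨?_, ?_, ?_, ?_, ?_, ?_⟩
  · intro x y h
    have := n1 _ _ h.2
    grind
  · intro x y h z hz
    have := n2 _ _ h.2 (z + A.omega)
    grind
  · grind
  · grind
  · grind
  · intro x y z h h'
    have := n6 _ _ _ h.2 h'.2
    omega

theorem fS_matching {s t} (hs : Matching A B s) (ht : Matching (comp A B s) C t) :
    Matching A (comp B C (fT A.omega t)) (fS A.omega B.omega s t) := by
  obtain ⟨u1, d1, e1, e2, f1, f2⟩ := hA.V
  obtain ⟨u2, d2, e3, e4, f3, f4⟩ := hB.V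
  obtain ⟨u3, d3, e5, e6, f5, f6⟩ := hC.V
  rw [matching_iff] at *
  simp only [mem_up_comp, mem_dn_comp, mem_ed_comp, mem_fT, mem_fS] at *
  obtain ⟨m1, m2, m3, m4, m5, m6⟩ := hs
  obtain ⟨n1, n2, n3, n4, n5, n6⟩ := ht
  refine ⟨?_, ?_, ?_, ?_, ?_, ?_⟩
  · grind
  · grind
  · grind
  · grind
  · intro x y z h h'
    rcases h with h | ⟨h1, h2, h⟩ <;> rcases h' with h' | ⟨h1', h2', h'⟩
    · exact m5 _ _ _ h h'
    · exact absurd (Or.inr (Or.inl ⟨by omega, by simpa using h⟩)) (n2 _ _ h' (y + A.omega))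
    · exact absurd (Or.inr (Or.inl ⟨by omega, by simpa using h'⟩)) (n2 _ _ h (z + A.omega))
    · have := n5 _ _ _ h h'
      omega
  · grind

theorem gS_matching {s t} (ht : Matching B C t) (hs : Matching A (comp B C t) s) :
    Matching A B (gS B.omega s) := by
  obtain ⟨u1, d1, e1, e2, f1, f2⟩ := hA.V
  obtain ⟨u2, d2, e3, e4, f3, f4⟩ := hB.V
  obtain ⟨u3, d3, e5, e6, f5, f6⟩ := hC.V
  rw [matching_iff] at *
  simp only [mem_dn_comp, mem_ed_comp, mem_gS] at *
  obtain ⟨m1, m2, m3, m4, m5, m6⟩ := hs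
  obtain ⟨n1, n2, n3, n4, n5, n6⟩ := ht
  refine ⟨?_, ?_, ?_, ?_, ?_, ?_⟩ <;> grind

theorem gT_matching {s t} (ht : Matching B C t) (hs : Matching A (comp B C t) s) :
    Matching (comp A B (gS B.omega s)) C (gT A.omega B.omega t s) := by
  obtain ⟨u1, d1, e1, e2, f1, f2⟩ := hA.V
  obtain ⟨u2, d2, e3, e4, f3, f4⟩ := hB.V
  obtain ⟨u3, d3, e5, e6, f5, f6⟩ := hC.V
  rw [matching_iff] at *
  simp only [mem_up_comp, mem_dn_comp, mem_ed_comp, mem_gS, mem_gT] at *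
  obtain ⟨m1, m2, m3, m4, m5, m6⟩ := hs
  obtain ⟨n1, n2, n3, n4, n5, n6⟩ := ht
  refine ⟨?_, ?_, ?_, ?_, ?_, ?_⟩
  · grind
  · grind
  · intro x y h
    rcases h with h | h
    · have := m3 _ _ h.2
      grind
    · exact n3 _ _ h.2
  · intro x y h z hz
    rcases h with h | h
    · have := m4 _ _ h.2 (z + B.omega)
      grind
    · exact n4 _ _ h.2 _ hz
  · grind
  · intro x y z h h'
    rcases h with ⟨h1, h⟩ | ⟨h1, h⟩ <;> rcases h' with ⟨h1', h'⟩ | ⟨h1', h'⟩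
    · exact m6 _ _ _ h h'
    · exact absurd (Or.inr (Or.inl ⟨by omega, by simpa using h'⟩)) (m4 _ _ h (y - A.omega))
    · exact absurd (Or.inr (Or.inl ⟨by omega, by simpa using h⟩)) (m4 _ _ h' (x - A.omega))
    · have := n6 _ _ _ h h'
      omega

theorem gf_S {s t} (hs : Matching A B s) (ht : Matching (comp A B s) C t) :
    gS B.omega (fS A.omega B.omega s t) = s := by
  obtain ⟨u2, d2, e3, e4, f3, f4⟩ := hB.V
  obtain ⟨u3, d3, e5, e6, f5, f6⟩ := hC.V
  rw [matching_iff] at hs ht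
  obtain ⟨m1, m2, m3, m4, m5, m6⟩ := hs
  obtain ⟨n1, n2, n3, n4, n5, n6⟩ := ht
  ext ⟨x, y⟩
  rw [mem_gS, mem_fS]
  grind

theorem gf_T {s t} (hs : Matching A B s) (ht : Matching (comp A B s) C t) :
    gT A.omega B.omega (fT A.omega t) (fS A.omega B.omega s t) = t := by
  obtain ⟨u1, d1, e1, e2, f1, f2⟩ := hA.V
  obtain ⟨u2, d2, e3, e4, f3, f4⟩ := hB.V
  obtain ⟨u3, d3, e5, e6, f5, f6⟩ := hC.V
  rw [matching_iff] at hs ht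
  obtain ⟨m1, m2, m3, m4, m5, m6⟩ := hs
  obtain ⟨n1, n2, n3, n4, n5, n6⟩ := ht
  ext ⟨x, y⟩
  rw [mem_gT, mem_fS, mem_fT]
  grind

theorem fg_T {s t} (ht : Matching B C t) (hs : Matching A (comp B C t) s) :
    fT A.omega (gT A.omega B.omega t s) = t := by
  obtain ⟨u1, d1, e1, e2, f1, f2⟩ := hA.V
  obtain ⟨u2, d2, e3, e4, f3, f4⟩ := hB.V
  rw [matching_iff] at hs ht
  obtain ⟨m1, m2, m3, m4, m5, m6⟩ := hs
  obtain ⟨n1, n2, n3, n4, n5, n6⟩ := ht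
  ext ⟨x, y⟩
  rw [mem_fT, mem_gT]
  grind

theorem fg_S {s t} (ht : Matching B C t) (hs : Matching A (comp B C t) s) :
    fS A.omega B.omega (gS B.omega s) (gT A.omega B.omega t s) = s := by
  obtain ⟨u1, d1, e1, e2, f1, f2⟩ := hA.V
  obtain ⟨u2, d2, e3, e4, f3, f4⟩ := hB.V
  rw [matching_iff] at hs ht
  obtain ⟨m1, m2, m3, m4, m5, m6⟩ := hs
  obtain ⟨n1, n2, n3, n4, n5, n6⟩ := ht
  ext ⟨x, y⟩
  rw [mem_fS, mem_gS, mem_gT]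
  grind

theorem comp_comp {s t} (hs : Matching A B s) (ht : Matching (comp A B s) C t) :
    comp (comp A B s) C t = comp A (comp B C (fT A.omega t)) (fS A.omega B.omega s t) := by
  obtain ⟨u1, d1, e1, e2, f1, f2⟩ := hA.V
  obtain ⟨u2, d2, e3, e4, f3, f4⟩ := hB.V
  obtain ⟨u3, d3, e5, e6, f5, f6⟩ := hC.V
  rw [matching_iff] at hs ht
  obtain ⟨m1, m2, m3, m4, m5, m6⟩ := hs
  obtain ⟨n1, n2, n3, n4, n5, n6⟩ := ht
  have ext' : ∀ G G' : BD, G.lam = G'.lam → G.up = G'.up → G.dn = G'.dn → G.ed = G'.ed →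
      G = G' := by
    rintro ⟨l, u, d, e⟩ ⟨l', u', d', e'⟩ h1 h2 h3 h4
    cases h1; cases h2; cases h3; cases h4
    rfl
  apply ext'
  · simp [comp]
  · ext x
    simp only [mem_up_comp, omega_comp]
    grind
  · ext x
    simp only [mem_dn_comp, omega_comp]
    grind
  · simp only [mem_up_comp] at n1
    ext ⟨x, y⟩
    simp only [mem_ed_comp, omega_comp, mem_fT, mem_fS, Nat.sub_sub]
    grind

end

end BD

theorem liftB_single {V : Type*} [AddCommMonoid V] [Module ℂ V] (f : BDiagram → V) (A) :
    liftB f (Finsupp.single A 1) = f A := by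
  simp [liftB]

theorem starB_single (A B : BDiagram) :
    starB (Finsupp.single A 1) (Finsupp.single B 1) = mulfun A B := by
  rw [starB, liftB_single, liftB_single]

theorem mkB_valid {G : BD} (h : G.Valid) : mkB G = Finsupp.single ⟨G, h⟩ 1 := by
  simp [mkB, h]

theorem starB_mkB {A B : BD} (hA : A.Valid) (hB : B.Valid) :
    starB (mkB A) (mkB B) = ∑ s ∈ BD.matchings A B, mkB (BD.comp A B s) := by
  rw [mkB_valid hA, mkB_valid hB, starB_single]
  rfl

theorem assoc_mkB {A B C : BD} (hA : A.Valid) (hB : B.Valid) (hC : C.Valid) :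
    starB (starB (mkB A) (mkB B)) (mkB C) = starB (mkB A) (starB (mkB B) (mkB C)) := by
  rw [starB_mkB hA hB, starB_mkB hB hC]
  simp only [map_sum, LinearMap.sum_apply]
  have h1 : ∀ s ∈ BD.matchings A B, starB (mkB (BD.comp A B s)) (mkB C) =
      ∑ t ∈ BD.matchings (BD.comp A B s) C, mkB (BD.comp (BD.comp A B s) C t) := fun s hs =>
    starB_mkB (BD.comp_valid hA hB (BD.mem_matchings.1 hs)) hC
  have h2 : ∀ t ∈ BD.matchings B C, starB (mkB A) (mkB (BD.comp B C t)) =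
      ∑ s ∈ BD.matchings A (BD.comp B C t), mkB (BD.comp A (BD.comp B C t) s) := fun s hs =>
    starB_mkB hA (BD.comp_valid hB hC (BD.mem_matchings.1 hs))
  rw [Finset.sum_congr rfl h1, Finset.sum_congr rfl h2, Finset.sum_sigma', Finset.sum_sigma']
  refine Finset.sum_bij' (fun p _ => ⟨BD.fT A.omega p.2, BD.fS A.omega B.omega p.1 p.2⟩)
    (fun p _ => ⟨BD.gS B.omega p.2, BD.gT A.omega B.omega p.1 p.2⟩) ?_ ?_ ?_ ?_ ?_ <;>
  · rintro ⟨s, t⟩ h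
    simp only [Finset.mem_sigma, BD.mem_matchings] at h ⊢
    obtain ⟨hs, ht⟩ := h
    first
    | exact ⟨BD.fT_matching hA hB hC hs ht, BD.fS_matching hA hB hC hs ht⟩
    | exact ⟨BD.gS_matching hA hB hC hs ht, BD.gT_matching hA hB hC hs ht⟩
    | rw [BD.gf_S hA hB hC hs ht, BD.gf_T hA hB hC hs ht]
    | rw [BD.fg_S hA hB hC hs ht, BD.fg_T hA hB hC hs ht]
    | rw [BD.comp_comp hA hB hC hs ht]

theorem BD.eps_comp (A : BD) : BD.comp BD.eps A ∅ = A := by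
  cases A
  simp [BD.comp, BD.eps, BD.omega]

theorem BD.comp_eps (A : BD) : BD.comp A BD.eps ∅ = A := by
  cases A
  simp [BD.comp, BD.eps, BD.omega]

theorem BD.matchings_eps (A : BD) : BD.matchings A BD.eps = {∅} := by
  ext s
  rw [BD.mem_matchings, Finset.mem_singleton]
  constructor
  · intro h
    rw [Finset.eq_empty_iff_forall_notMem]
    intro p hp
    simpa [BD.HfDn, BD.eps] using (h.1 p hp).2
  · rintro rfl
    simp [BD.Matching]

theorem BD.eps_matchings (A : BD) : BD.matchings BD.eps A = {∅} := by
  ext s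
  rw [BD.mem_matchings, Finset.mem_singleton]
  constructor
  · intro h
    rw [Finset.eq_empty_iff_forall_notMem]
    intro p hp
    simpa [BD.HfUp, BD.eps] using (h.1 p hp).1
  · rintro rfl
    simp [BD.Matching]

theorem unitB_eq : unitB = mkB BD.eps := (mkB_valid _).symm

/-- `(ℬ, ⋆)` is an associative unital `ℂ`-algebra with unit the empty
B-diagram, graded by `ω`: the product of two B-diagrams is a linear combination of
B-diagrams whose number of half-edges is the sum of the numbers of half-edges. -/
theorem starB_assoc_unital_graded :
    (∀ u v w : BSpace, starB (starB u v) w = starB u (starB v w)) ∧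
    (∀ u : BSpace, starB unitB u = u ∧ starB u unitB = u) ∧
    (∀ A B : BDiagram, ∀ C ∈ (starB (Finsupp.single A 1) (Finsupp.single B 1)).support,
      C.1.omega = A.1.omega + B.1.omega) := by
  refine ⟨?_, ?_, ?_⟩
  · intro u v w
    induction u using Finsupp.induction_linear with
    | zero => simp
    | add f g hf hg => simp [hf, hg]
    | single A a =>
    induction v using Finsupp.induction_linear with
    | zero => simp
    | add f g hf hg => simp only [map_add, LinearMap.add_apply, hf, hg]
    | single B b =>
    induction w using Finsupp.induction_linear with
    | zero => simp
    | add f g hf hg => simp only [map_add, hf, hg]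
    | single C c =>
    have e : ∀ (D : BDiagram) (d : ℂ), Finsupp.single D d = d • mkB D.1 := by
      intro D d
      rw [mkB_valid D.2]
      simp
    rw [e A, e B, e C]
    simp only [map_smul, LinearMap.smul_apply, assoc_mkB A.2 B.2 C.2]
  · intro u
    induction u using Finsupp.induction_linear with
    | zero => simp
    | add f g hf hg => simp [hf, hg]
    | single A a =>
    have e : Finsupp.single A a = a • mkB A.1 := by
      rw [mkB_valid A.2]
      simp
    rw [e, unitB_eq]
    simp only [map_smul, LinearMap.smul_apply, starB_mkB BD.eps_valid A.2,
      starB_mkB A.2 BD.eps_valid, BD.matchings_eps, BD.eps_matchings, Finset.sum_singleton,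
      BD.eps_comp, BD.comp_eps, and_self]
  · intro A B C hC
    rw [starB_single, mulfun] at hC
    classical
    obtain ⟨s, hs, h⟩ := Finset.mem_biUnion.1 (Finsupp.support_finsetSum hC)
    rw [mkB_valid (BD.comp_valid A.2 B.2 (BD.mem_matchings.1 hs))] at h
    have := Finset.mem_singleton.1 (Finsupp.support_single_subset h)
    rw [this]
    exact BD.omega_comp _ _ _
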